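/- arXiv:1412.0628 — 2 statements merged into one kernel-verified Lean document; each statement's English description precedes it below -/
import Mathlib

section
/- Let G₀ be a finite simple graph whose non-isolated vertices induce a graph of type B. Then in the 3-regular graph game starting from G₀, the first player has a strategy that forces the event that some connected component of the current graph is 3-regular or has an eventual cut vertex; the second player likewise has such a strategy. -/
/-!
Call a vertex saturated if it has degree 3. The whole argument rests on one sufficient condition
for the good event (`goodEvent_of_closed`): a set `S` that no edge leaves and in which every vertex
other than a single non-isolated vertex `x` is saturated. If `x` is saturated too, its component is
3-regular; otherwise `x` is an eventual cut vertex, since `x` has at most two neighbors altogether.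

Let `u ~ v` and `w` be the three vertices of degree 2 of the type ℬ graph. The player to move can
join `u` and `w`, after which only `v` is unsaturated; so the first player wins in one move.

For the second player, consider the first move of the opponent.
* If it joins two isolated vertices, answer with `uw`; if it is `uw` or `vw`, the event has occurred.
* If it joins an isolated vertex `z` to `u`, answer `vw` (symmetrically `uw` against `vz`), leaving
  only `z` unsaturated.
* If it joins an isolated `z` to `w`, answer `zu`. Now `z` and `v` are the only unsaturated vertices
  of the component, each lacks one edge, and they are not adjacent (`L1_of_two`). The opponent either
  plays `zv`, or attaches a new vertex `y` to one of them, answered by joining `y` to the other one,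
  or plays elsewhere, answered by `zv`.
-/

open SimpleGraph

namespace GraphGame

/-- The degree of a vertex, defined via the cardinality of its neighbor set. -/
noncomputable def deg {V : Type} (G : SimpleGraph V) (v : V) : ℕ :=
  (G.neighborSet v).ncard

/-- The graph obtained from `G` by adding the edge between `u` and `v`. -/
def addEdge {V : Type} (G : SimpleGraph V) (u v : V) : SimpleGraph V :=
  G ⊔ SimpleGraph.fromEdgeSet {s(u, v)}

/-- A legal move in the `k`-regular graph game: draw an edge between two distinct
non-adjacent vertices, so that afterwards every vertex still has degree at most `k`. -/
def LegalMove {V : Type} (k : ℕ) (G : SimpleGraph V) (u v : V) : Prop :=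
  u ≠ v ∧ ¬ G.Adj u v ∧ ∀ w, deg (addEdge G u v) w ≤ k

/-- A position is terminal when no legal move remains. -/
def Terminal {V : Type} (k : ℕ) (G : SimpleGraph V) : Prop :=
  ∀ u v, ¬ LegalMove k G u v

/-- A strategy (a choice of an edge to draw at every position) is valid if it assigns a
legal move to every non-terminal position. -/
def ValidStrategy {V : Type} (k : ℕ) (s : SimpleGraph V → V × V) : Prop :=
  ∀ G : SimpleGraph V, ¬ Terminal k G → LegalMove k G (s G).1 (s G).2

/-- `IsPlay k r s G₀ g` : `g` is a play of the `k`-regular graph game starting from `G₀`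
in which the player moving at steps `i` with `i % 2 = r` (so `r = 0` for the first player
and `r = 1` for the second player) follows the strategy `s`, and the opponent moves
arbitrarily (legally).  Once a terminal position is reached the sequence stays constant. -/
def IsPlay {V : Type} (k r : ℕ) (s : SimpleGraph V → V × V) (G₀ : SimpleGraph V)
    (g : ℕ → SimpleGraph V) : Prop :=
  g 0 = G₀ ∧ ∀ i : ℕ,
    (Terminal k (g i) → g (i + 1) = g i) ∧
    (¬ Terminal k (g i) →
      (i % 2 = r → g (i + 1) = addEdge (g i) (s (g i)).1 (s (g i)).2) ∧
      (i % 2 ≠ r → ∃ u v, LegalMove k (g i) u v ∧ g (i + 1) = addEdge (g i) u v))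

/-- The player moving at steps `≡ r (mod 2)` has a strategy ensuring that the final graph
(i.e. the terminal graph reached at the end of every play) satisfies `P`. -/
def Ensures {V : Type} (k r : ℕ) (G₀ : SimpleGraph V) (P : SimpleGraph V → Prop) : Prop :=
  ∃ s : SimpleGraph V → V × V, ValidStrategy k s ∧
    ∀ g : ℕ → SimpleGraph V, IsPlay k r s G₀ g →
      ∀ n, Terminal k (g n) → P (g n)

/-- The player moving at steps `≡ r (mod 2)` has a strategy forcing the event that at some
stage the current graph satisfies `P`. -/
def Forces {V : Type} (k r : ℕ) (G₀ : SimpleGraph V) (P : SimpleGraph V → Prop) : Prop :=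
  ∃ s : SimpleGraph V → V × V, ValidStrategy k s ∧
    ∀ g : ℕ → SimpleGraph V, IsPlay k r s G₀ g → ∃ n, P (g n)

end GraphGame

namespace GraphGame

/-- `x` is an eventual cut vertex of `H`: the graph `H − x` (encoded by deleting from `H`
all edges incident to `x`) has a connected component `S` not containing `x` such that `x`
has exactly one or two `H`-neighbors in `S` and every vertex of `S` has degree 3 in `H`. -/
def EventualCutVertex {V : Type} [DecidableEq V] (H : SimpleGraph V) (x : V) : Prop :=
  ∃ c : (H.deleteEdges (H.incidenceSet x)).ConnectedComponent,
    x ∉ c.supp ∧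
    ((H.neighborSet x ∩ c.supp).ncard = 1 ∨ (H.neighborSet x ∩ c.supp).ncard = 2) ∧
    ∀ v ∈ c.supp, deg H v = 3

/-- The event that some connected component of `G` is 3-regular or has an eventual cut
vertex. -/
def GoodEvent {V : Type} [DecidableEq V] (G : SimpleGraph V) : Prop :=
  (∃ c : G.ConnectedComponent, ∀ v ∈ c.supp, deg G v = 3) ∨
  (∃ x : V, EventualCutVertex G x)

/-- The degrees of freedom of a set `A` of vertices: `F(A) = Σ_{v ∈ A} (3 - deg v)`,
degrees taken in the ambient graph. -/
noncomputable def Fdof {V : Type} (G : SimpleGraph V) (A : Set V) : ℤ :=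
  ∑ᶠ v ∈ A, (3 - (deg G v : ℤ))

/-- The effective degrees of freedom of a union `D` of connected components:
`E(D) = Σᵢ (F(Dⁱ) - 2)`, the sum ranging over the connected components contained in `D`. -/
noncomputable def Edof {V : Type} (G : SimpleGraph V) (D : Set V) : ℤ :=
  ∑ᶠ c ∈ {c : G.ConnectedComponent | c.supp ⊆ D}, (Fdof G c.supp - 2)

/-- A graph is of type 𝒜 if one of its connected components is a single edge (two adjacent
vertices of degree 1) and every other connected component is 3-regular except for exactly
two vertices of degree 2, which are not adjacent. -/
def IsTypeA {α : Type} (H : SimpleGraph α) : Prop :=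
  ∃ a b : α, H.Adj a b ∧ deg H a = 1 ∧ deg H b = 1 ∧
    ∀ c : H.ConnectedComponent, c ≠ H.connectedComponentMk a →
      (∀ v ∈ c.supp, deg H v = 2 ∨ deg H v = 3) ∧
      ({v ∈ c.supp | deg H v = 2}).ncard = 2 ∧
      (∀ u v : α, u ∈ c.supp → v ∈ c.supp → deg H u = 2 → deg H v = 2 → ¬ H.Adj u v)

/-- A connected graph is of type ℬ if it is 3-regular except for exactly three vertices of
degree 2, exactly two of which are adjacent. -/
def IsTypeB {α : Type} (H : SimpleGraph α) : Prop :=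
  H.Connected ∧ (∀ v, deg H v = 2 ∨ deg H v = 3) ∧
  ∃ u v w : α, u ≠ v ∧ u ≠ w ∧ v ≠ w ∧
    {x : α | deg H x = 2} = {u, v, w} ∧ H.Adj u v ∧ ¬ H.Adj u w ∧ ¬ H.Adj v w

/-- A connected component is of type ℋ if it is 3-regular except for exactly two vertices
of degree 2, which are adjacent. -/
def CompTypeH {V : Type} (G : SimpleGraph V) (c : G.ConnectedComponent) : Prop :=
  (∀ v ∈ c.supp, deg G v = 2 ∨ deg G v = 3) ∧
  ({v ∈ c.supp | deg G v = 2}).ncard = 2 ∧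
  ∀ u v : V, u ∈ c.supp → v ∈ c.supp → deg G u = 2 → deg G v = 2 → u ≠ v → G.Adj u v

end GraphGame

namespace GraphGame

set_option linter.unusedSectionVars false

variable {V : Type}

/-! ### Effect of a move on adjacency and degrees -/

lemma addEdge_adj (G : SimpleGraph V) (u v a b : V) :
    (addEdge G u v).Adj a b ↔ G.Adj a b ∨ ((a = u ∧ b = v ∨ a = v ∧ b = u) ∧ a ≠ b) := by
  simp [addEdge]

lemma addEdge_comm (G : SimpleGraph V) (u v : V) : addEdge G u v = addEdge G v u := by
  unfold addEdge; rw [Sym2.eq_swap]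

lemma LegalMove.symm {k : ℕ} {G : SimpleGraph V} {u v : V} (h : LegalMove k G u v) :
    LegalMove k G v u := by
  refine ⟨h.1.symm, fun h' => h.2.1 h'.symm, ?_⟩
  rw [addEdge_comm]; exact h.2.2

variable [Fintype V]

lemma deg_addEdge_left (G : SimpleGraph V) {u v : V} (huv : u ≠ v) (h : ¬ G.Adj u v) :
    deg (addEdge G u v) u = deg G u + 1 := by
  unfold deg
  have : (addEdge G u v).neighborSet u = insert v (G.neighborSet u) := by
    ext b
    simp only [mem_neighborSet, addEdge_adj, Set.mem_insert_iff]
    constructor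
    · rintro (h | ⟨⟨-, h⟩ | ⟨h, -⟩, -⟩)
      · exact Or.inr h
      · exact Or.inl h
      · exact absurd h huv
    · rintro (rfl | h)
      · exact Or.inr ⟨Or.inl ⟨trivial, rfl⟩, huv⟩
      · exact Or.inl h
  rw [this, Set.ncard_insert_of_notMem (by simpa using h) (Set.toFinite _)]

lemma deg_addEdge_right (G : SimpleGraph V) {u v : V} (huv : u ≠ v) (h : ¬ G.Adj u v) :
    deg (addEdge G u v) v = deg G v + 1 := by
  rw [addEdge_comm]
  exact deg_addEdge_left G huv.symm (fun h' => h h'.symm)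

lemma deg_addEdge_of_ne (G : SimpleGraph V) {u v w : V} (hu : w ≠ u) (hv : w ≠ v) :
    deg (addEdge G u v) w = deg G w := by
  unfold deg
  congr 1
  ext b
  simp [addEdge_adj, hu, hv]

lemma legalMove_iff {G : SimpleGraph V} (hG : ∀ t, deg G t ≤ 3) (u v : V) :
    LegalMove 3 G u v ↔ u ≠ v ∧ ¬ G.Adj u v ∧ deg G u ≤ 2 ∧ deg G v ≤ 2 := by
  constructor
  · rintro ⟨h1, h2, h3⟩
    have hu := h3 u
    have hv := h3 v
    rw [deg_addEdge_left G h1 h2] at hu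
    rw [deg_addEdge_right G h1 h2] at hv
    exact ⟨h1, h2, by omega, by omega⟩
  · rintro ⟨h1, h2, h3, h4⟩
    refine ⟨h1, h2, fun t => ?_⟩
    by_cases htu : t = u
    · subst htu; rw [deg_addEdge_left G h1 h2]; omega
    by_cases htv : t = v
    · subst htv; rw [deg_addEdge_right G h1 h2]; omega
    rw [deg_addEdge_of_ne G htu htv]; exact hG t

lemma not_adj_of_deg_zero {G : SimpleGraph V} {a : V} (h : deg G a = 0) (b : V) :
    ¬ G.Adj a b := by
  intro hab
  have : G.neighborSet a = ∅ := (Set.ncard_eq_zero (Set.toFinite _)).1 h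
  exact Set.notMem_empty b (this ▸ hab)

/-! ### Closed sets and the good event -/

/-- No edge of `G` leaves `S`; equivalently, `S` is a union of connected components. -/
def Closed (G : SimpleGraph V) (S : Set V) : Prop :=
  ∀ a b, a ∈ S → G.Adj a b → b ∈ S

lemma Closed.reachable {G : SimpleGraph V} {S : Set V} (hS : Closed G S) {a b : V}
    (ha : a ∈ S) (h : G.Reachable a b) : b ∈ S := by
  obtain ⟨p⟩ := h
  induction p with
  | nil => exact ha
  | cons hadj _ ih => exact ih (hS _ _ ha hadj)

lemma Closed.addEdge {G : SimpleGraph V} {S : Set V} (hS : Closed G S) {a b : V}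
    (hab : a ∈ S ↔ b ∈ S) : Closed (addEdge G a b) S := by
  intro c d hc h
  rw [addEdge_adj] at h
  rcases h with h | ⟨⟨rfl, rfl⟩ | ⟨rfl, rfl⟩, -⟩
  · exact hS _ _ hc h
  · exact hab.1 hc
  · exact hab.2 hc

/-- A closed set stays closed if an isolated vertex is added to it. -/
lemma Closed.insert {G : SimpleGraph V} {S : Set V} (hS : Closed G S) {z : V}
    (hz : deg G z = 0) : Closed G (insert z S) := by
  rintro a b (rfl | ha) h
  · exact absurd h (not_adj_of_deg_zero hz b)
  · exact Or.inr (hS _ _ ha h)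

variable [DecidableEq V]

/-- The criterion for the good event: a closed set with at most one unsaturated vertex `x`, which is
not isolated. -/
lemma goodEvent_of_closed {G : SimpleGraph V} {S : Set V} (hS : Closed G S) {x : V} (hx : x ∈ S)
    (h1 : 1 ≤ deg G x) (h3 : deg G x ≤ 3) (hsat : ∀ t ∈ S, t ≠ x → deg G t = 3) :
    GoodEvent G := by
  by_cases hx3 : deg G x = 3
  · left
    refine ⟨G.connectedComponentMk x, fun t ht => ?_⟩
    have ht' : G.Reachable x t := by
      rw [ConnectedComponent.mem_supp_iff, ConnectedComponent.eq] at ht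
      exact ht.symm
    by_cases h : t = x
    · rw [h, hx3]
    · exact hsat t (hS.reachable hx ht') h
  · right
    refine ⟨x, ?_⟩
    have hne : (G.neighborSet x).Nonempty := by
      apply (Set.ncard_pos (Set.toFinite _)).1
      exact h1
    obtain ⟨y, hy⟩ := hne
    have hyx : G.Adj x y := hy
    -- `x` is isolated after deleting its edges, hence not in the component of `y`
    have hxnot : ¬ (G.deleteEdges (G.incidenceSet x)).Reachable x y := by
      rintro ⟨p⟩
      cases p with
      | nil => exact G.loopless.irrefl _ hyx
      | cons hadj _ =>
        rw [deleteEdges_adj] at hadj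
        exact hadj.2 ⟨hadj.1, by simp⟩
    refine ⟨(G.deleteEdges (G.incidenceSet x)).connectedComponentMk y, ?_, ?_, ?_⟩
    · rw [ConnectedComponent.mem_supp_iff, ConnectedComponent.eq]
      exact hxnot
    · have hle : (G.neighborSet x ∩
          ((G.deleteEdges (G.incidenceSet x)).connectedComponentMk y).supp).ncard ≤ deg G x :=
        Set.ncard_le_ncard Set.inter_subset_left (Set.toFinite _)
      have hpos : 0 < (G.neighborSet x ∩
          ((G.deleteEdges (G.incidenceSet x)).connectedComponentMk y).supp).ncard :=
        (Set.ncard_pos (Set.toFinite _)).2 ⟨y, hy, by simp⟩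
      omega
    · intro t ht
      rw [ConnectedComponent.mem_supp_iff, ConnectedComponent.eq] at ht
      apply hsat t
      · exact hS.reachable (hS _ _ hx hyx) ((ht.mono (deleteEdges_le _)).symm)
      · rintro rfl
        exact hxnot ht

/-! ### Positions won within one or two moves -/

/-- The player to move can bring about the good event at once. -/
def W1 (G : SimpleGraph V) : Prop :=
  ∃ a b, LegalMove 3 G a b ∧ GoodEvent (addEdge G a b)

/-- A non-terminal position in which every move yields the good event or lets the other player
bring it about at once. -/
def L1 (G : SimpleGraph V) : Prop :=
  ¬ Terminal 3 G ∧ ∀ a b, LegalMove 3 G a b → GoodEvent (addEdge G a b) ∨ W1 (addEdge G a b)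

/-- A non-terminal position in which every move yields the good event or lets the other player
bring it about at once or move to an `L1` position. -/
def L2 (G : SimpleGraph V) : Prop :=
  ¬ Terminal 3 G ∧ ∀ a b, LegalMove 3 G a b →
    GoodEvent (addEdge G a b) ∨ W1 (addEdge G a b) ∨
      ∃ c d, LegalMove 3 (addEdge G a b) c d ∧ L1 (addEdge (addEdge G a b) c d)

lemma W1.not_terminal {G : SimpleGraph V} (h : W1 G) : ¬ Terminal 3 G := by
  obtain ⟨a, b, h, -⟩ := h
  exact fun ht => ht a b h

/-- One positional strategy serves both players: win at once if possible, otherwise move to an `L1`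
position if possible, otherwise play any legal move. -/
lemma exists_strategy [Nonempty V] : ∃ s : SimpleGraph V → V × V, ValidStrategy 3 s ∧
    (∀ G, W1 G → GoodEvent (addEdge G (s G).1 (s G).2)) ∧
    (∀ G, ¬ W1 G → (∃ c d, LegalMove 3 G c d ∧ L1 (addEdge G c d)) →
      L1 (addEdge G (s G).1 (s G).2)) := by
  have key : ∀ G : SimpleGraph V, ∃ p : V × V,
      (¬ Terminal 3 G → LegalMove 3 G p.1 p.2) ∧
      (W1 G → GoodEvent (addEdge G p.1 p.2)) ∧
      (¬ W1 G → (∃ c d, LegalMove 3 G c d ∧ L1 (addEdge G c d)) →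
        L1 (addEdge G p.1 p.2)) := by
    intro G
    by_cases h1 : W1 G
    · obtain ⟨a, b, hl, hg⟩ := id h1
      exact ⟨(a, b), fun _ => hl, fun _ => hg, fun h => absurd h1 h⟩
    by_cases h2 : ∃ c d, LegalMove 3 G c d ∧ L1 (addEdge G c d)
    · obtain ⟨a, b, hl, hg⟩ := id h2
      exact ⟨(a, b), fun _ => hl, fun h => absurd h h1, fun _ _ => hg⟩
    by_cases h3 : Terminal 3 G
    · exact ⟨Classical.arbitrary _, fun h => absurd h3 h, fun h => absurd h h1,
        fun _ h => absurd h h2⟩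
    · have : ∃ a b, LegalMove 3 G a b := by
        simpa [Terminal] using h3
      obtain ⟨a, b, hl⟩ := this
      exact ⟨(a, b), fun _ => hl, fun h => absurd h h1, fun _ h => absurd h h2⟩
  choose s hs using key
  exact ⟨s, fun G => (hs G).1, fun G => (hs G).2.1, fun G => (hs G).2.2⟩

lemma forces_first [Nonempty V] {G₀ : SimpleGraph V} (h : W1 G₀) :
    Forces 3 0 G₀ (fun G => GoodEvent G) := by
  obtain ⟨s, hv, h1, -⟩ := exists_strategy (V := V)
  refine ⟨s, hv, fun g hg => ⟨1, ?_⟩⟩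
  obtain ⟨h0, hg⟩ := hg
  have := ((hg 0).2 (by rw [h0]; exact h.not_terminal)).1 rfl
  rw [zero_add] at this
  rw [this, h0]
  exact h1 _ h

lemma forces_second [Nonempty V] {G₀ : SimpleGraph V} (h : L2 G₀) :
    Forces 3 1 G₀ (fun G => GoodEvent G) := by
  obtain ⟨s, hv, h1, h2⟩ := exists_strategy (V := V)
  refine ⟨s, hv, fun g hg => ?_⟩
  obtain ⟨h0, hg⟩ := hg
  have win : ∀ i, i % 2 = 1 → W1 (g i) → ∃ n, GoodEvent (g n) := by
    intro i hi hw
    refine ⟨i + 1, ?_⟩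
    rw [((hg i).2 hw.not_terminal).1 hi]
    exact h1 _ hw
  obtain ⟨a, b, hl, hab⟩ := ((hg 0).2 (by rw [h0]; exact h.1)).2 (by norm_num)
  rw [zero_add] at hab
  rw [h0] at hl hab
  rcases h.2 a b hl with hgood | hw | hmove
  · exact ⟨1, by rw [hab]; exact hgood⟩
  · exact win 1 rfl (by rw [hab]; exact hw)
  by_cases hw : W1 (g 1)
  · exact win 1 rfl hw
  rw [← hab] at hmove
  have hL := h2 _ hw hmove
  have hnt : ¬ Terminal 3 (g 1) := by
    obtain ⟨c, d, hcd, -⟩ := hmove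
    exact fun ht => ht c d hcd
  have e2 := ((hg 1).2 hnt).1 rfl
  rw [← e2] at hL
  obtain ⟨c, d, hl', hcd⟩ := ((hg 2).2 hL.1).2 (by norm_num)
  rcases hL.2 c d hl' with hgood | hw3
  · exact ⟨3, by rw [hcd]; exact hgood⟩
  · exact win 3 rfl (by rw [hcd]; exact hw3)

/-! ### Analysis of the positions -/

/-- Joining `p` and `q` wins if afterwards `x` is the only possibly unsaturated vertex of the closed
set `S`; the vertex `x` may coincide with `q`. -/
lemma good_of_join {G : SimpleGraph V} {S : Set V} (hS : Closed G S) {p q x : V}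
    (hp : p ∈ S) (hq : q ∈ S) (hx : x ∈ S) (hpq : p ≠ q) (hadj : ¬ G.Adj p q) (hxp : x ≠ p)
    (hdp : deg G p = 2) (hdq : deg G q = 2 ∨ q = x ∧ deg G q ≤ 2)
    (hx1 : 1 ≤ deg G x) (hx3 : deg G x ≤ 3)
    (hsat : ∀ t ∈ S, t ≠ p → t ≠ q → t ≠ x → deg G t = 3) :
    GoodEvent (addEdge G p q) := by
  have eq : deg (GraphGame.addEdge G p q) q = deg G q + 1 := deg_addEdge_right G hpq hadj
  have ep : deg (GraphGame.addEdge G p q) p = deg G p + 1 := deg_addEdge_left G hpq hadj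
  have hxdeg : 1 ≤ deg (GraphGame.addEdge G p q) x ∧ deg (GraphGame.addEdge G p q) x ≤ 3 := by
    by_cases hxq : x = q
    · subst hxq
      rw [eq]
      omega
    · rw [deg_addEdge_of_ne G hxp hxq]
      exact ⟨hx1, hx3⟩
  refine goodEvent_of_closed (hS.addEdge (iff_of_true hp hq)) hx hxdeg.1 hxdeg.2 ?_
  intro t ht htx
  by_cases htp : t = p
  · subst htp; rw [ep, hdp]
  by_cases htq : t = q
  · subst htq
    rw [eq]
    rcases hdq with h | h
    · rw [h]
    · exact absurd h.1 htx
  · rw [deg_addEdge_of_ne G htp htq]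
    exact hsat t ht htp htq htx

lemma W1_of_join {G : SimpleGraph V} (hG : ∀ t, deg G t ≤ 3) {S : Set V} (hS : Closed G S)
    {p q x : V} (hp : p ∈ S) (hq : q ∈ S) (hx : x ∈ S) (hpq : p ≠ q) (hadj : ¬ G.Adj p q)
    (hxp : x ≠ p) (hdp : deg G p = 2) (hdq : deg G q = 2 ∨ q = x ∧ deg G q ≤ 2)
    (hx1 : 1 ≤ deg G x) (hsat : ∀ t ∈ S, t ≠ p → t ≠ q → t ≠ x → deg G t = 3) : W1 G :=
  ⟨p, q, (legalMove_iff hG p q).2 ⟨hpq, hadj, by omega, by rcases hdq with h | h <;> omega⟩,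
    good_of_join hS hp hq hx hpq hadj hxp hdp hdq hx1 (hG x) hsat⟩

/-- Answer to a move that attaches the isolated vertex `y` to one of the two unsaturated vertices
`p`, `q` of a closed set: join `y` to the other one. -/
lemma W1_of_two_attach {G : SimpleGraph V} {S : Set V} (hS : Closed G S)
    {p q y : V} (hp : p ∈ S) (hq : q ∈ S) (hpq : p ≠ q)
    (hdp : deg G p = 2) (hdq : deg G q = 2) (hsat : ∀ t ∈ S, t ≠ p → t ≠ q → deg G t = 3)
    (hout : ∀ t ∉ S, deg G t = 0) (hy : y ∉ S) (hl : LegalMove 3 G p y) :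
    W1 (addEdge G p y) := by
  have hyp : y ≠ p := fun h => hy (h ▸ hp)
  have hyq : y ≠ q := fun h => hy (h ▸ hq)
  have hdy := deg_addEdge_right G hl.1 hl.2.1
  have hdp' := deg_addEdge_left G hl.1 hl.2.1
  have hy0 := hout y hy
  refine W1_of_join hl.2.2 (S := insert y S) (p := q) (q := y) (x := y)
    ((hS.insert hy0).addEdge ?_) (Or.inr hq) (Or.inl rfl) (Or.inl rfl) hyq.symm ?_ hyq ?_
    (Or.inr ⟨rfl, by omega⟩) (by omega) ?_
  · exact iff_of_true (Or.inr hp) (Or.inl rfl)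
  · rw [addEdge_adj]
    have := not_adj_of_deg_zero hy0 q
    rintro (h | ⟨⟨h, -⟩ | ⟨h, -⟩, -⟩)
    · exact this h.symm
    · exact hpq h.symm
    · exact hyq h.symm
  · rw [deg_addEdge_of_ne G hpq.symm hyq.symm, hdq]
  · rintro t (rfl | ht) htq hty -
    · exact absurd rfl hty
    by_cases htp : t = p
    · subst htp; rw [hdp', hdp]
    · rw [deg_addEdge_of_ne G htp hty]
      exact hsat t ht htp htq

/-- If all vertices outside `S` are isolated and exactly two vertices `p`, `q` of `S` are
unsaturated, of degree 2 and not adjacent, then the player not to move wins. -/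
lemma L1_of_two {G : SimpleGraph V} (hG : ∀ t, deg G t ≤ 3) {S : Set V} (hS : Closed G S)
    {p q : V} (hp : p ∈ S) (hq : q ∈ S) (hpq : p ≠ q) (hadj : ¬ G.Adj p q)
    (hdp : deg G p = 2) (hdq : deg G q = 2) (hsat : ∀ t ∈ S, t ≠ p → t ≠ q → deg G t = 3)
    (hout : ∀ t ∉ S, deg G t = 0) : L1 G := by
  have hfin : GoodEvent (addEdge G p q) :=
    good_of_join hS hp hq hq hpq hadj hpq.symm hdp (Or.inl hdq) (by omega) (by omega)
      (fun t ht h1 h2 _ => hsat t ht h1 h2)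
  refine ⟨fun ht => ht p q ((legalMove_iff hG p q).2 ⟨hpq, hadj, hdp.le, hdq.le⟩), ?_⟩
  intro a b hl
  have hin : ∀ t ∈ S, deg G t ≤ 2 → t = p ∨ t = q := by
    intro t ht h2
    by_contra! hc
    have := hsat t ht hc.1 hc.2
    omega
  have attach : ∀ a b, LegalMove 3 G a b → a ∈ S → b ∉ S → W1 (addEdge G a b) := by
    intro a b hl ha hb
    rcases hin a ha ((legalMove_iff hG a b).1 hl).2.2.1 with rfl | rfl
    · exact W1_of_two_attach hS hp hq hpq hdp hdq hsat hout hb hl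
    · exact W1_of_two_attach hS hq hp hpq.symm hdq hdp (fun t ht h1 h2 => hsat t ht h2 h1)
        hout hb hl
  obtain ⟨hab, hnadj, h2a, h2b⟩ := (legalMove_iff hG a b).1 hl
  by_cases ha : a ∈ S <;> by_cases hb : b ∈ S
  · left
    rcases hin a ha h2a with rfl | rfl <;> rcases hin b hb h2b with rfl | rfl
    · exact absurd rfl hab
    · exact hfin
    · rw [addEdge_comm]; exact hfin
    · exact absurd rfl hab
  · exact Or.inr (attach a b hl ha hb)
  · right
    rw [addEdge_comm]
    exact attach b a hl.symm hb ha
  · right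
    have hd : ∀ t ∈ S, deg (addEdge G a b) t = deg G t := fun t ht =>
      deg_addEdge_of_ne G (fun h => ha (h ▸ ht)) (fun h => hb (h ▸ ht))
    refine W1_of_join hl.2.2 (hS.addEdge (iff_of_false ha hb)) hp hq hq hpq ?_ hpq.symm
      (by rw [hd p hp, hdp]) (Or.inl (by rw [hd q hq, hdq])) (by rw [hd q hq]; omega)
      (fun t ht h1 h2 _ => by rw [hd t ht]; exact hsat t ht h1 h2)
    rw [addEdge_adj]
    rintro (h | ⟨⟨h, -⟩ | ⟨h, -⟩, -⟩)
    · exact hadj h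
    · exact ha (h ▸ hp)
    · exact hb (h ▸ hp)

/-- A type ℬ graph on the vertex set `S`, without the connectedness, and isolated vertices
elsewhere. The vertices of degree 2 are `u`, `v`, `w`, and `u`, `v` are adjacent. -/
structure TypeBPos (G : SimpleGraph V) (S : Set V) (u v w : V) : Prop where
  closed : Closed G S
  u_mem : u ∈ S
  v_mem : v ∈ S
  w_mem : w ∈ S
  uv : u ≠ v
  uw : u ≠ w
  vw : v ≠ w
  nuw : ¬ G.Adj u w
  nvw : ¬ G.Adj v w
  auv : G.Adj u v
  du : deg G u = 2
  dv : deg G v = 2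
  dw : deg G w = 2
  sat : ∀ t ∈ S, t ≠ u → t ≠ v → t ≠ w → deg G t = 3
  out : ∀ t ∉ S, deg G t = 0

namespace TypeBPos

variable {G : SimpleGraph V} {S : Set V} {u v w : V}

lemma swap (h : TypeBPos G S u v w) : TypeBPos G S v u w :=
  ⟨h.closed, h.v_mem, h.u_mem, h.w_mem, h.uv.symm, h.vw, h.uw, h.nvw, h.nuw, h.auv.symm,
    h.dv, h.du, h.dw, fun t ht h1 h2 h3 => h.sat t ht h2 h1 h3, h.out⟩

lemma le (h : TypeBPos G S u v w) (t : V) : deg G t ≤ 3 := by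
  by_cases ht : t ∈ S
  · by_cases h1 : t = u
    · rw [h1, h.du]; norm_num
    by_cases h2 : t = v
    · rw [h2, h.dv]; norm_num
    by_cases h3 : t = w
    · rw [h3, h.dw]; norm_num
    exact (h.sat t ht h1 h2 h3).le
  · rw [h.out t ht]; norm_num

lemma good (h : TypeBPos G S u v w) : GoodEvent (addEdge G u w) :=
  good_of_join h.closed h.u_mem h.w_mem h.v_mem h.uw h.nuw h.uv.symm h.du (Or.inl h.dw)
    (by rw [h.dv]; norm_num) (h.le v) (fun t ht h1 h2 h3 => h.sat t ht h1 h3 h2)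

lemma legal (h : TypeBPos G S u v w) : LegalMove 3 G u w :=
  (legalMove_iff h.le u w).2 ⟨h.uw, h.nuw, h.du.le, h.dw.le⟩

lemma win (h : TypeBPos G S u v w) : W1 G := ⟨u, w, h.legal, h.good⟩

/-- The answer `vw` to `uz` with `z` isolated. -/
lemma attach_u (h : TypeBPos G S u v w) {z : V} (hz : z ∉ S) (hl : LegalMove 3 G u z) :
    W1 (addEdge G u z) := by
  have hzv : v ≠ z := fun e => hz (e ▸ h.v_mem)
  have hzw : w ≠ z := fun e => hz (e ▸ h.w_mem)
  have hdz := deg_addEdge_right G hl.1 hl.2.1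
  have hdu := deg_addEdge_left G hl.1 hl.2.1
  have hz0 := h.out z hz
  refine W1_of_join hl.2.2 (S := insert z S) (p := v) (q := w) (x := z)
    ((h.closed.insert hz0).addEdge (iff_of_true (Or.inr h.u_mem) (Or.inl rfl)))
    (Or.inr h.v_mem) (Or.inr h.w_mem) (Or.inl rfl) h.vw ?_ hzv.symm ?_ (Or.inl ?_) (by omega) ?_
  · rw [addEdge_adj]
    rintro (h' | ⟨⟨h', -⟩ | ⟨h', -⟩, -⟩)
    · exact h.nvw h'
    · exact h.uv h'.symm
    · exact hzv h'
  · rw [deg_addEdge_of_ne G h.uv.symm hzv, h.dv]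
  · rw [deg_addEdge_of_ne G h.uw.symm hzw, h.dw]
  · rintro t (rfl | ht) htv htw htz
    · exact absurd rfl htz
    by_cases htu : t = u
    · subst htu; rw [hdu, h.du]
    · rw [deg_addEdge_of_ne G htu htz]
      exact h.sat t ht htu htv htw

/-- The answer `zu` to `wz` with `z` isolated. -/
lemma attach_w (h : TypeBPos G S u v w) {z : V} (hz : z ∉ S) (hl : LegalMove 3 G w z) :
    ∃ c d, LegalMove 3 (addEdge G w z) c d ∧ L1 (addEdge (addEdge G w z) c d) := by
  have hzu : z ≠ u := fun e => hz (e ▸ h.u_mem)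
  have hzv : z ≠ v := fun e => hz (e ▸ h.v_mem)
  have hzw : z ≠ w := fun e => hz (e ▸ h.w_mem)
  have hz0 := h.out z hz
  have hz1 := deg_addEdge_right G hl.1 hl.2.1
  have hw1 := deg_addEdge_left G hl.1 hl.2.1
  have hu1 : deg (addEdge G w z) u = deg G u := deg_addEdge_of_ne G h.uw hzu.symm
  have hnadj : ¬ (addEdge G w z).Adj z u := by
    rw [addEdge_adj]
    rintro (h' | ⟨⟨h', -⟩ | ⟨-, h'⟩, -⟩)
    · exact not_adj_of_deg_zero hz0 u h'
    · exact hzw h'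
    · exact h.uw h'
  have hl2 : LegalMove 3 (addEdge G w z) z u :=
    (legalMove_iff hl.2.2 z u).2 ⟨hzu, hnadj, by omega, by rw [hu1, h.du]⟩
  refine ⟨z, u, hl2, ?_⟩
  have hz2 := deg_addEdge_left _ hl2.1 hl2.2.1
  have hu2 := deg_addEdge_right _ hl2.1 hl2.2.1
  have hother : ∀ t, t ≠ z → t ≠ u → t ≠ w →
      deg (addEdge (addEdge G w z) z u) t = deg G t := by
    intro t h1 h2 h3
    rw [deg_addEdge_of_ne _ h1 h2, deg_addEdge_of_ne _ h3 h1]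
  refine L1_of_two hl2.2.2 (S := insert z S) (p := z) (q := v)
    (((h.closed.insert hz0).addEdge (iff_of_true (Or.inr h.w_mem) (Or.inl rfl))).addEdge
      (iff_of_true (Or.inl rfl) (Or.inr h.u_mem)))
    (Or.inl rfl) (Or.inr h.v_mem) hzv ?_ (by omega)
    (by rw [hother v hzv.symm h.uv.symm h.vw, h.dv]) ?_ ?_
  · rw [addEdge_adj, addEdge_adj]
    rintro ((h' | ⟨⟨h', -⟩ | ⟨-, h'⟩, -⟩) | ⟨⟨-, h'⟩ | ⟨h', -⟩, -⟩)
    · exact not_adj_of_deg_zero hz0 v h'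
    · exact hzw h'
    · exact h.vw h'
    · exact h.uv h'.symm
    · exact hzu h'
  · rintro t (rfl | ht) htz htv
    · exact absurd rfl htz
    by_cases htu : t = u
    · subst htu; rw [hu2, hu1, h.du]
    by_cases htw : t = w
    · subst htw
      rw [deg_addEdge_of_ne _ htz htu, hw1, h.dw]
    · rw [hother t htz htu htw]
      exact h.sat t ht htu htv htw
  · intro t ht
    have ht' : t ≠ z ∧ t ∉ S := by simpa [Set.mem_insert_iff] using ht
    rw [hother t ht'.1 (fun e => ht'.2 (e ▸ h.u_mem)) (fun e => ht'.2 (e ▸ h.w_mem))]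
    exact h.out t ht'.2

/-- A move outside `S` does not disturb the winning reply `uw`. -/
lemma elsewhere (h : TypeBPos G S u v w) {a b : V} (ha : a ∉ S) (hb : b ∉ S)
    (hl : LegalMove 3 G a b) : W1 (addEdge G a b) := by
  have hd : ∀ t ∈ S, deg (addEdge G a b) t = deg G t := fun t ht =>
    deg_addEdge_of_ne G (fun e => ha (e ▸ ht)) (fun e => hb (e ▸ ht))
  refine W1_of_join hl.2.2 (h.closed.addEdge (iff_of_false ha hb)) h.u_mem h.w_mem h.v_mem h.uw
    ?_ h.uv.symm (by rw [hd _ h.u_mem, h.du]) (Or.inl (by rw [hd _ h.w_mem, h.dw]))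
    (by rw [hd _ h.v_mem, h.dv]; norm_num)
    (fun t ht h1 h2 h3 => by rw [hd t ht]; exact h.sat t ht h1 h3 h2)
  rw [addEdge_adj]
  rintro (h' | ⟨⟨h', -⟩ | ⟨h', -⟩, -⟩)
  · exact h.nuw h'
  · exact ha (h' ▸ h.u_mem)
  · exact hb (h' ▸ h.u_mem)

lemma l2 (h : TypeBPos G S u v w) : L2 G := by
  refine ⟨h.win.not_terminal, fun a b hl => ?_⟩
  have hin : ∀ t ∈ S, deg G t ≤ 2 → t = u ∨ t = v ∨ t = w := by
    intro t ht h2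
    by_contra! hc
    have := h.sat t ht hc.1 hc.2.1 hc.2.2
    omega
  have attach : ∀ a b, LegalMove 3 G a b → a ∈ S → b ∉ S → W1 (addEdge G a b) ∨
      ∃ c d, LegalMove 3 (addEdge G a b) c d ∧ L1 (addEdge (addEdge G a b) c d) := by
    intro a b hl ha hb
    rcases hin a ha ((legalMove_iff h.le a b).1 hl).2.2.1 with rfl | rfl | rfl
    · exact Or.inl (h.attach_u hb hl)
    · exact Or.inl (h.swap.attach_u hb hl)
    · exact Or.inr (h.attach_w hb hl)
  obtain ⟨hab, hnadj, h2a, h2b⟩ := (legalMove_iff h.le a b).1 hl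
  by_cases ha : a ∈ S <;> by_cases hb : b ∈ S
  · left
    rcases hin a ha h2a with rfl | rfl | rfl <;> rcases hin b hb h2b with rfl | rfl | rfl
    · exact absurd rfl hab
    · exact absurd h.auv hnadj
    · exact h.good
    · exact absurd h.auv.symm hnadj
    · exact absurd rfl hab
    · exact h.swap.good
    · rw [addEdge_comm]; exact h.good
    · rw [addEdge_comm]; exact h.swap.good
    · exact absurd rfl hab
  · exact Or.inr (attach a b hl ha hb)
  · right
    rw [addEdge_comm]
    exact attach b a hl.symm hb ha
  · exact Or.inr (Or.inl (h.elsewhere ha hb hl))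

end TypeBPos

lemma deg_induce_nonisolated (G : SimpleGraph V) (v : {v : V | 0 < deg G v}) :
    deg (G.induce {v : V | 0 < deg G v}) v = deg G v := by
  unfold deg
  rw [← Set.ncard_image_of_injective _ Subtype.val_injective]
  congr 1
  ext b
  simp only [Set.mem_image, mem_neighborSet]
  constructor
  · rintro ⟨c, hc, rfl⟩
    exact hc
  · intro hb
    have hb0 : 0 < deg G b := by
      by_contra h0
      exact not_adj_of_deg_zero (by omega) _ hb.symm
    exact ⟨⟨b, hb0⟩, hb, rfl⟩

lemma exists_typeBPos {G : SimpleGraph V} (hB : IsTypeB (G.induce {v : V | 0 < deg G v})) :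
    ∃ u v w, TypeBPos G {v : V | 0 < deg G v} u v w := by
  obtain ⟨-, hdeg, u, v, w, huv, huw, hvw, hset, auv, nuw, nvw⟩ := hB
  have hmem : ∀ x, deg G x.1 = 2 ↔ x = u ∨ x = v ∨ x = w := by
    intro x
    have := Set.ext_iff.1 hset x
    rwa [Set.mem_ofPred_eq, deg_induce_nonisolated] at this
  refine ⟨u, v, w, ?_, u.2, v.2, w.2, fun e => huv (Subtype.ext e), fun e => huw (Subtype.ext e),
    fun e => hvw (Subtype.ext e), nuw, nvw, auv, (hmem u).2 (by simp), (hmem v).2 (by simp),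
    (hmem w).2 (by simp), ?_, ?_⟩
  · intro a b _ hab
    by_contra h0
    have h0' : deg G b = 0 := by
      simpa using h0
    exact not_adj_of_deg_zero h0' _ hab.symm
  · intro t ht h1 h2 h3
    have := hdeg ⟨t, ht⟩
    rw [deg_induce_nonisolated] at this
    rcases this with h | h
    · rcases (hmem ⟨t, ht⟩).1 h with e | e | e
      · exact absurd (congrArg Subtype.val e) h1
      · exact absurd (congrArg Subtype.val e) h2
      · exact absurd (congrArg Subtype.val e) h3
    · exact h
  · intro t ht
    simpa using ht

end GraphGame

open GraphGame in
/-- If the non-isolated vertices of `G₀` induce a graph of type ℬ, then in the 3-regular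
graph game starting from `G₀`, the first player (and likewise the second player) has a
strategy forcing that at some stage some connected component of the current graph is
3-regular or has an eventual cut vertex. -/
theorem typeB_forces_blocking_component
    (V : Type) [Fintype V] [DecidableEq V] (G₀ : SimpleGraph V)
    (hB : IsTypeB (G₀.induce {v : V | 0 < deg G₀ v})) :
    Forces 3 0 G₀ (fun G => GoodEvent G) ∧ Forces 3 1 G₀ (fun G => GoodEvent G) := by
  obtain ⟨u, v, w, h⟩ := exists_typeBPos hB
  have : Nonempty V := ⟨u⟩
  exact ⟨forces_first h.win, forces_second h.l2⟩
end

section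
/- Let C be a finite connected simple graph in which exactly four vertices have degree 2 and every other vertex has degree 3. Then the four vertices of degree 2 can be labeled u, v, p, q in such a way that u is not adjacent to v and p is not adjacent to q. -/
/-!
The four vertices of degree 2 admit three splittings into two pairs. If each splitting contained
an edge, then choosing one edge from each would produce either a star centred at one of the four
vertices, or a triangle on three of them. A star would give its centre degree at least 3
(`star_false`). In a triangle each vertex already has both of its neighbours inside the triangle,
so the triangle is closed under adjacency, and connectedness leaves no room for the fourth vertex
(`triangle_false`).
-/

open SimpleGraph

/-- The degree of a vertex, defined via the cardinality of its neighbor set. -/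
noncomputable def deg {V : Type} (G : SimpleGraph V) (v : V) : ℕ :=
  (G.neighborSet v).ncard

lemma neighborSet_eq_pair {V : Type} [Fintype V] {C : SimpleGraph V} {a b c : V}
    (ha : deg C a = 2) (hbc : b ≠ c) (hab : C.Adj a b) (hac : C.Adj a c) :
    C.neighborSet a = {b, c} := by
  symm
  apply Set.eq_of_subset_of_ncard_le
  · rintro x (rfl | rfl)
    · exact hab
    · exact hac
  · rw [Set.ncard_pair hbc]
    exact ha.le
  · exact Set.toFinite _

lemma star_false {V : Type} [Fintype V] {C : SimpleGraph V} {a b c d : V}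
    (ha : deg C a = 2) (hbc : b ≠ c) (hbd : b ≠ d) (hcd : c ≠ d)
    (hab : C.Adj a b) (hac : C.Adj a c) (had : C.Adj a d) : False := by
  have h : d ∈ C.neighborSet a := had
  rw [neighborSet_eq_pair ha hbc hab hac] at h
  rcases h with h | h
  · exact hbd h.symm
  · exact hcd h.symm

lemma triangle_false {V : Type} [Fintype V] {C : SimpleGraph V} (hconn : C.Connected)
    {a b c d : V} (ha : deg C a = 2) (hb : deg C b = 2) (hc : deg C c = 2)
    (hda : d ≠ a) (hdb : d ≠ b) (hdc : d ≠ c)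
    (hab : C.Adj a b) (hac : C.Adj a c) (hbc : C.Adj b c) : False := by
  have closed : ∀ x y : V, C.Adj x y → x ∈ ({a, b, c} : Set V) → y ∈ ({a, b, c} : Set V) := by
    intro x y hxy hx
    have hy : y ∈ C.neighborSet x := hxy
    rcases hx with rfl | rfl | rfl
    · rw [neighborSet_eq_pair ha hbc.ne hab hac] at hy
      exact Or.inr hy
    · rw [neighborSet_eq_pair hb hac.ne hab.symm hbc] at hy
      rcases hy with h | h
      · exact Or.inl h
      · exact Or.inr (Or.inr h)
    · rw [neighborSet_eq_pair hc hab.ne hac.symm hbc.symm] at hy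
      rcases hy with h | h
      · exact Or.inl h
      · exact Or.inr (Or.inl h)
  have walk_closed : ∀ x y : V, C.Walk x y → x ∈ ({a, b, c} : Set V) →
      y ∈ ({a, b, c} : Set V) := by
    intro x y w
    induction w with
    | nil => exact id
    | cons h _ ih => exact fun hx => ih (closed _ _ h hx)
  obtain ⟨w⟩ := hconn.preconnected a d
  rcases walk_closed a d w (Or.inl rfl) with h | h | h
  · exact hda h
  · exact hdb h
  · exact hdc h

/-- Let `C` be a finite connected simple graph in which exactly four vertices have degree 2
and every other vertex has degree 3.  Then the four vertices of degree 2 can be labeled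
`u, v, p, q` so that `u` is not adjacent to `v` and `p` is not adjacent to `q`. -/
theorem degree_two_vertices_pairing
    (V : Type) [Fintype V] (C : SimpleGraph V) (hconn : C.Connected)
    (hdeg : ∀ x : V, deg C x = 2 ∨ deg C x = 3)
    (hfour : ({x : V | deg C x = 2}).ncard = 4) :
    ∃ u v p q : V, u ≠ v ∧ u ≠ p ∧ u ≠ q ∧ v ≠ p ∧ v ≠ q ∧ p ≠ q ∧
      {x : V | deg C x = 2} = {u, v, p, q} ∧
      ¬ C.Adj u v ∧ ¬ C.Adj p q := by
  classical
  obtain ⟨a, b, c, d, hab, hac, had, hbc, hbd, hcd, hS⟩ :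
      ∃ a b c d : V, a ≠ b ∧ a ≠ c ∧ a ≠ d ∧ b ≠ c ∧ b ≠ d ∧ c ≠ d ∧
        {x : V | deg C x = 2} = {a, b, c, d} := by
    rw [Set.ncard_eq_toFinset_card', Finset.card_eq_succ] at hfour
    obtain ⟨a, t, hat, hS, ht⟩ := hfour
    obtain ⟨b, c, d, hbc, hbd, hcd, rfl⟩ := Finset.card_eq_three.mp ht
    simp only [Finset.mem_insert, Finset.mem_singleton, not_or] at hat
    refine ⟨a, b, c, d, hat.1, hat.2.1, hat.2.2, hbc, hbd, hcd, ?_⟩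
    rw [← Set.coe_toFinset {x : V | deg C x = 2}, ← hS]
    simp
  have mem : ∀ x ∈ ({a, b, c, d} : Set V), deg C x = 2 := fun x hx => by
    rw [← hS] at hx
    exact hx
  have da : deg C a = 2 := mem a (by simp)
  have db : deg C b = 2 := mem b (by simp)
  have dc : deg C c = 2 := mem c (by simp)
  have dd : deg C d = 2 := mem d (by simp)
  by_cases h₁ : ¬ C.Adj a b ∧ ¬ C.Adj c d
  · exact ⟨a, b, c, d, hab, hac, had, hbc, hbd, hcd, hS, h₁⟩
  by_cases h₂ : ¬ C.Adj a c ∧ ¬ C.Adj b d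
  · refine ⟨a, c, b, d, hac, hab, had, hbc.symm, hcd, hbd, ?_, h₂⟩
    rw [hS, Set.insert_comm b c]
  by_cases h₃ : ¬ C.Adj a d ∧ ¬ C.Adj b c
  · refine ⟨a, d, b, c, had, hab, hac, hbd.symm, hcd.symm, hbc, ?_, h₃⟩
    rw [hS, Set.pair_comm c d, Set.insert_comm b d]
  exfalso
  rw [← not_or, not_not] at h₁ h₂ h₃
  rcases h₁ with e | e <;> rcases h₂ with f | f <;> rcases h₃ with g | g
  -- ab, ac, ad
  · exact star_false da hbc hbd hcd e f g
  -- ab, ac, bc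
  · exact triangle_false hconn da db dc had.symm hbd.symm hcd.symm e f g
  -- ab, bd, ad
  · exact triangle_false hconn da db dd hac.symm hbc.symm hcd e g f
  -- ab, bd, bc
  · exact star_false db hac had hcd e.symm g f
  -- cd, ac, ad
  · exact triangle_false hconn da dc dd hab.symm hbc hbd f g e
  -- cd, ac, bc
  · exact star_false dc hab had hbd f.symm g.symm e
  -- cd, bd, ad
  · exact star_false dd hab hac hbc g.symm f.symm e.symm
  -- cd, bd, bc
  · exact triangle_false hconn db dc dd hab hac had g f e
end
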